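/- Let n = 2 or n = 3, and let C ⊆ ℝⁿ be an infinite rational curve that is not a line. Then every isometry f of ℝⁿ with f(C) = C has a fixed point. (Equivalently: an algebraic rational curve other than a line cannot be invariant under a nontrivial translation or glide reflection, nor, in space, under a twist.) -/

import Mathlib

open Polynomial Matrix RealInnerProductSpace

noncomputable section

/-- A rational parametrization of a curve in `ℝⁿ`: components `pᵢ/qᵢ` with `qᵢ ≠ 0` and
`gcd(pᵢ, qᵢ) = 1`. -/
structure RatParam (n : ℕ) where
  p : Fin n → Polynomial ℝ
  q : Fin n → Polynomial ℝ
  q_ne_zero : ∀ i, q i ≠ 0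
  coprime : ∀ i, IsCoprime (p i) (q i)

namespace RatParam

variable {n : ℕ}

/-- The (cofinite) set of parameters where the parametrization is defined. -/
def domain (X : RatParam n) : Set ℝ := {t | ∀ i, (X.q i).eval t ≠ 0}

/-- The value of the parametrization at a parameter `t`. -/
def eval (X : RatParam n) (t : ℝ) : EuclideanSpace ℝ (Fin n) :=
  WithLp.toLp 2 fun i => (X.p i).eval t / (X.q i).eval t

/-- The associated rational curve: the image of the parametrization over its domain. -/
def curve (X : RatParam n) : Set (EuclideanSpace ℝ (Fin n)) := X.eval '' X.domain

/-- A parametrization is proper if it is injective outside some finite set of parameters. -/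
def Proper (X : RatParam n) : Prop :=
  ∃ F : Set ℝ, F.Finite ∧ Set.InjOn X.eval (X.domain \ F)

end RatParam

/-- A line in `ℝⁿ`: a one-dimensional affine subspace, as a set. -/
def IsLine {n : ℕ} (S : Set (EuclideanSpace ℝ (Fin n))) : Prop :=
  ∃ (p v : EuclideanSpace ℝ (Fin n)), v ≠ 0 ∧ S = {x | ∃ s : ℝ, x = p + s • v}

/-! A fixed-point-free isometry `f` of a finite-dimensional Euclidean space has an axis, the line
through some `o` with direction `v ≠ 0`, along which it translates by `v`. The axial coordinate `h`
satisfies `h ∘ f = h + 1`, and the radial part `r` satisfies `r ∘ f = A ∘ r` for a linear isometry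
`A`. On a rational curve `C` invariant under `f`, any component `⟪w, r⟫` and `h` are rational
functions of one parameter, hence satisfy a nonzero polynomial relation `F (⟪w, r⟫, h) = 0`. Along
an orbit of `f` the coordinate `h` tends to infinity while `r`, moving by an isometry in a compact
ball, returns arbitrarily close to its initial value; so the leading coefficient of `F` in `h`
vanishes at that value. Thus `⟪w, r⟫` takes finitely many values on `C`, so it is constant, and `C`
lies on a parallel to the axis. Finally `h (C)` is invariant under the shifts by `±1` and, being the
unbounded image of finitely many intervals, contains a half-line; so `C` is the whole line. -/

open Filter Set Topology Polynomial.Bivariate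

theorem exists_aevalAeval_eq_zero {K A : Type*} [Field K] [CommRing A] [Algebra K A]
    (hA : Algebra.trdeg K A < 2) (x y : A) :
    ∃ F : K[X][Y], F ≠ 0 ∧ aevalAeval x y F = 0 := by
  by_contra! hne
  have hinj : Function.Injective (aevalAeval (R := K) x y) :=
    (injective_iff_map_eq_zero _).2 fun F hF => by_contra fun hF0 => hne F hF0 hF
  have htwo : Algebra.trdeg K K[X][Y] = 2 := by
    rw [← trdeg_add_eq K K[X], Polynomial.trdeg_of_isDomain, Polynomial.trdeg_of_isDomain,
      one_add_one_eq_two]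
  have hle := lift_trdeg_le_of_injective _ hinj
  rw [htwo, Cardinal.lift_ofNat, Cardinal.ofNat_le_lift_iff] at hle
  exact hle.not_gt hA

theorem trdeg_localizationAway {K : Type*} [Field K] {Q : K[X]} (hQ : Q ≠ 0) :
    Algebra.trdeg K (Localization.Away Q) = 1 := by
  have hM := powers_le_nonZeroDivisors_of_noZeroDivisors hQ
  have := IsLocalization.isDomain_localization hM
  have := IsLocalization.isAlgebraic (R := K[X]) (S := Localization.Away Q) (Submonoid.powers Q)
  have := (faithfulSMul_iff_algebraMap_injective K[X] (Localization.Away Q)).2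
    (IsLocalization.injective _ hM)
  rw [← trdeg_add_eq K K[X], Polynomial.trdeg_of_isDomain, trdeg_eq_zero, add_zero]

theorem exists_evalEval_div_eq_zero {K : Type*} [Field K] (P N : K[X]) {Q : K[X]} (hQ : Q ≠ 0) :
    ∃ F : K[X][Y], F ≠ 0 ∧ ∀ t, Q.eval t ≠ 0 →
      F.evalEval (P.eval t / Q.eval t) (N.eval t / Q.eval t) = 0 := by
  let L := Localization.Away Q
  have hlt : Algebra.trdeg K L < 2 := by
    rw [trdeg_localizationAway hQ]
    exact Cardinal.one_lt_two
  obtain ⟨F, hF0, hF⟩ := exists_aevalAeval_eq_zero hlt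
    (algebraMap K[X] L P * IsLocalization.Away.invSelf Q)
    (algebraMap K[X] L N * IsLocalization.Away.invSelf Q)
  refine ⟨F, hF0, fun t ht => ?_⟩
  let ev : L →ₐ[K] K := IsLocalization.Away.liftAlgHom (f := aeval t) Q (by simpa using ht)
  have hmap : ∀ G, ev (algebraMap K[X] L G) = G.eval t := fun G => by simp [ev]
  have hdiv : ∀ G, ev (algebraMap K[X] L G * IsLocalization.Away.invSelf Q) =
      G.eval t / Q.eval t := fun G => by
    rw [eq_div_iff ht, ← hmap Q, ← map_mul, mul_right_comm, mul_assoc,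
      IsLocalization.Away.mul_invSelf, mul_one, hmap]
  have hcomp : ∀ x y : L, ev.comp (aevalAeval x y) = aevalAeval (ev x) (ev y) := by
    intro x y
    ext <;> simp
  have hzero := congrArg ev hF
  rwa [← AlgHom.comp_apply, hcomp, hdiv, hdiv, coe_aevalAeval_eq_evalEval, map_zero] at hzero

theorem isRoot_leadingCoeff_of_tendsto {ι : Type*} {l : Filter ι} [l.NeBot] {F : ℝ[X][Y]}
    {u w : ι → ℝ} {γ : ℝ} (hF : ∀ᶠ i in l, F.evalEval (u i) (w i) = 0)
    (hu : Tendsto u l (𝓝 γ)) (hw : Tendsto w l atTop) : F.leadingCoeff.IsRoot γ := by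
  -- `F (u, w) = 0` amounts to `F.reverse (u, w⁻¹) = 0`, where now `w⁻¹ → 0`.
  have hcont : Continuous fun p : ℝ × ℝ => F.reverse.evalEval p.1 p.2 := by
    simp only [evalEval, eval_eq_sum_range (p := F.reverse), eval_finsetSum, eval_mul, eval_pow,
      eval_C]
    fun_prop
  have hlim := (hcont.tendsto (γ, 0)).comp (hu.prodMk_nhds (tendsto_inv_atTop_zero.comp hw))
  have hzero : ∀ᶠ i in l, F.reverse.evalEval (u i) (w i)⁻¹ = 0 := by
    filter_upwards [hF, hw.eventually_ne_atTop 0] with i hi hwi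
    rw [← eval₂_evalRingHom] at hi ⊢
    have := invertibleOfNonzero hwi
    rwa [← invOf_eq_inv, eval₂_reverse_eq_zero_iff]
  have := tendsto_nhds_unique hlim (tendsto_const_nhds.congr' <| hzero.mono fun i hi => hi.symm)
  rwa [evalEval, C_0, ← coeff_zero_eq_eval_zero, coeff_zero_reverse] at this

/-- `g` is given on `s` by a quotient of polynomials whose denominator has no zero in `s`. -/
def IsRationalOn {K : Type*} [Field K] (g : K → K) (s : Set K) : Prop :=
  ∃ P Q : K[X], ∀ t ∈ s, Q.eval t ≠ 0 ∧ g t = P.eval t / Q.eval t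

namespace IsRationalOn

variable {K : Type*} [Field K] {g h : K → K} {s : Set K}

theorem const (a : K) (s : Set K) : IsRationalOn (fun _ => a) s :=
  ⟨C a, 1, fun t _ => by simp⟩

theorem add (hg : IsRationalOn g s) (hh : IsRationalOn h s) :
    IsRationalOn (g + h) s := by
  obtain ⟨P₁, Q₁, h₁⟩ := hg
  obtain ⟨P₂, Q₂, h₂⟩ := hh
  refine ⟨P₁ * Q₂ + Q₁ * P₂, Q₁ * Q₂, fun t ht => ?_⟩
  rw [Pi.add_apply, (h₁ t ht).2, (h₂ t ht).2, div_add_div _ _ (h₁ t ht).1 (h₂ t ht).1]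
  simp only [eval_add, eval_mul]
  exact ⟨mul_ne_zero (h₁ t ht).1 (h₂ t ht).1, trivial⟩

theorem mul (hg : IsRationalOn g s) (hh : IsRationalOn h s) :
    IsRationalOn (g * h) s := by
  obtain ⟨P₁, Q₁, h₁⟩ := hg
  obtain ⟨P₂, Q₂, h₂⟩ := hh
  refine ⟨P₁ * P₂, Q₁ * Q₂, fun t ht => ?_⟩
  rw [Pi.mul_apply, (h₁ t ht).2, (h₂ t ht).2, div_mul_div_comm, eval_mul, eval_mul]
  exact ⟨mul_ne_zero (h₁ t ht).1 (h₂ t ht).1, rfl⟩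

theorem sum {ι : Type*} (I : Finset ι) {g : ι → K → K} (hg : ∀ i ∈ I, IsRationalOn (g i) s) :
    IsRationalOn (fun t => ∑ i ∈ I, g i t) s := by
  simpa only [Finset.sum_fn] using
    Finset.sum_induction g (IsRationalOn · s) (fun _ _ => add) (const 0 s) hg

theorem exists_evalEval_eq_zero (hg : IsRationalOn g s) (hh : IsRationalOn h s) :
    ∃ F : K[X][Y], F ≠ 0 ∧ ∀ t ∈ s, F.evalEval (g t) (h t) = 0 := by
  obtain rfl | ⟨t₀, ht₀⟩ := s.eq_empty_or_nonempty
  · exact ⟨1, one_ne_zero, by simp⟩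
  obtain ⟨P₁, Q₁, h₁⟩ := hg
  obtain ⟨P₂, Q₂, h₂⟩ := hh
  have hQ : ∀ t ∈ s, (Q₁ * Q₂).eval t ≠ 0 := fun t ht => by
    rw [eval_mul]
    exact mul_ne_zero (h₁ t ht).1 (h₂ t ht).1
  obtain ⟨F, hF₀, hF⟩ := exists_evalEval_div_eq_zero (P₁ * Q₂) (Q₁ * P₂) (Q := Q₁ * Q₂)
    (fun h => hQ t₀ ht₀ (by rw [h, eval_zero]))
  refine ⟨F, hF₀, fun t ht => ?_⟩
  have := hF t (hQ t ht)
  rwa [eval_mul, eval_mul, eval_mul, mul_div_mul_right _ _ (h₂ t ht).1,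
    mul_div_mul_left _ _ (h₁ t ht).1, ← (h₁ t ht).2, ← (h₂ t ht).2] at this

theorem exists_eqOn_const (hg : IsRationalOn g s) (hs : s.Infinite) (hfin : (g '' s).Finite) :
    ∃ a, ∀ t ∈ s, g t = a := by
  obtain ⟨a, ha⟩ : ∃ a, (s ∩ g ⁻¹' {a}).Infinite := by
    by_contra! hfib
    exact hs (.of_finite_fibers g hfin fun a _ => hfib a)
  obtain ⟨P, Q, h⟩ := hg
  have hPQ : P = C a * Q := by
    refine eq_of_infinite_eval_eq _ _ (ha.mono ?_)
    rintro t ⟨hts, rfl⟩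
    rw [mem_ofPred_eq, eval_mul, eval_C, ← div_eq_iff (h t hts).1, ← (h t hts).2]
  refine ⟨a, fun t ht => ?_⟩
  rw [(h t ht).2, hPQ, eval_mul, eval_C, mul_div_cancel_right₀ _ (h t ht).1]

theorem continuousOn {g : ℝ → ℝ} {s : Set ℝ} (hg : IsRationalOn g s) : ContinuousOn g s := by
  obtain ⟨P, Q, h⟩ := hg
  exact (P.continuousOn.div Q.continuousOn fun t ht => (h t ht).1).congr fun t ht => (h t ht).2

end IsRationalOn

theorem exists_finite_ordConnected_cover_compl {α : Type*} [LinearOrder α] {F : Set α}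
    (hF : F.Finite) :
    ∃ I : Set (Set α), I.Finite ∧ (∀ u ∈ I, u.OrdConnected) ∧ ⋃ u ∈ I, u = Fᶜ := by
  -- Two points outside `F` are in the same piece when the same points of `F` lie to their left.
  let piece (G : Set α) : Set α := {t | t ∉ F ∧ F ∩ Iio t = G}
  refine ⟨piece '' 𝒫 F, hF.finite_subsets.image piece, ?_, ?_⟩
  · rintro _ ⟨G, -, rfl⟩
    refine ⟨fun a ⟨_, ha⟩ b ⟨hbF, hb⟩ c ⟨hac, hcb⟩ => ⟨fun hcF => ?_, ?_⟩⟩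
    · have hc : c ∈ F ∩ Iio a := ha.trans hb.symm ▸ ⟨hcF, hcb.lt_of_ne fun h => hbF (h ▸ hcF)⟩
      exact hac.not_gt hc.2
    · exact (inter_subset_inter_right F (Iio_subset_Iio hcb)).trans hb.subset |>.antisymm
        (ha.superset.trans (inter_subset_inter_right F (Iio_subset_Iio hac)))
  · ext t
    simp only [biUnion_image, mem_iUnion, mem_compl_iff, piece, mem_ofPred_eq]
    exact ⟨fun ⟨_, _, ht, _⟩ => ht, fun ht => ⟨F ∩ Iio t, inter_subset_left, ht, rfl⟩⟩

theorem exists_Ici_subset_image_of_not_bddAbove {g : ℝ → ℝ} {s : Set ℝ} (hs : sᶜ.Finite)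
    (hg : ContinuousOn g s) (hunb : ¬ BddAbove (g '' s)) : ∃ a, Ici a ⊆ g '' s := by
  obtain ⟨I, hI, hconn, hcover⟩ := exists_finite_ordConnected_cover_compl hs
  rw [compl_compl] at hcover
  subst hcover
  rw [image_iUnion₂, hI.bddAbove_biUnion] at hunb
  push Not at hunb
  obtain ⟨u, hu, hgu⟩ := hunb
  have hus := subset_biUnion_of_mem (u := id) hu
  have himage : (g '' u).OrdConnected :=
    ((hconn u hu).isPreconnected.image g (hg.mono hus)).ordConnected
  obtain ⟨a, ha⟩ : (g '' u).Nonempty :=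
    nonempty_iff_ne_empty.2 fun h => hgu (h ▸ bddAbove_empty)
  refine ⟨a, fun b hab => image_mono hus ?_⟩
  obtain ⟨d, hd, hbd⟩ := not_bddAbove_iff.1 hgu b
  exact himage.out ha hd ⟨hab, hbd.le⟩

theorem eq_univ_of_add_one_mem_iff {H : Set ℝ} (hH : ∀ a, a + 1 ∈ H ↔ a ∈ H) {b : ℝ}
    (hb : Ici b ⊆ H) : H = univ := by
  refine eq_univ_of_forall fun a => ?_
  obtain ⟨k, hk⟩ := exists_nat_ge (b - a)
  have hshift : ∀ k : ℕ, a + k ∈ H ↔ a ∈ H := by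
    intro k
    induction k with
    | zero => simp
    | succ k ih => rw [Nat.cast_succ, ← add_assoc, hH, ih]
  exact (hshift k).1 (hb (by rw [mem_Ici]; linarith))

theorem isometry_iterate {α : Type*} [PseudoEMetricSpace α] {f : α → α} (hf : Isometry f) :
    ∀ k, Isometry f^[k]
  | 0 => isometry_id
  | k + 1 => (isometry_iterate hf k).comp hf

theorem mapClusterPt_iterate_of_isometry {α : Type*} [PseudoMetricSpace α] {f : α → α}
    (hf : Isometry f) {K : Set α} (hK : IsCompact K) {x : α} (hx : ∀ k, f^[k] x ∈ K) :
    MapClusterPt x atTop fun k => f^[k] x := by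
  refine Metric.nhds_basis_ball.mapClusterPt_iff_frequently.2 fun ε hε =>
    frequently_atTop.2 fun N => ?_
  obtain ⟨l, -, φ, hφ, hl⟩ := hK.tendsto_subseq hx
  obtain ⟨M, hM⟩ := Metric.cauchySeq_iff.1 hl.cauchySeq ε hε
  have hgap : N + φ M ≤ φ (N + M) := hφ.add_le_nat N M
  -- Cancelling `f^[φ M]` turns the closeness of two orbit points into a return close to `x`.
  refine ⟨φ (N + M) - φ M, by omega, ?_⟩
  rw [Metric.mem_ball, ← (isometry_iterate hf (φ M)).dist_eq, ← Function.iterate_add_apply,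
    Nat.add_sub_cancel' (by omega)]
  exact hM _ (by omega) _ le_rfl

section TranslationAxis

variable {E : Type*} [NormedAddCommGroup E] [InnerProductSpace ℝ E]

/-- `f` acts as translation by `v` on the line through `o` with direction `v`; for a glide
reflection or a screw motion this is the axis. -/
structure IsTranslationAxis (f : E →ᵃⁱ[ℝ] E) (o v : E) : Prop where
  map_origin : f o = o + v
  map_direction : f.linearIsometry v = v
  direction_ne_zero : v ≠ 0

theorem exists_isTranslationAxis [FiniteDimensional ℝ E] {f : E →ᵃⁱ[ℝ] E}
    (hf : ∀ x, f x ≠ x) : ∃ o v, IsTranslationAxis f o v := by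
  -- With `A` the linear part of `f`: the component of `f 0` in the range of `A - 1` is removed by
  -- moving the origin, and a vector orthogonal to that range is fixed by `A`.
  let T : E →ₗ[ℝ] E := f.linearIsometry.toLinearMap - LinearMap.id
  obtain ⟨_, ⟨w, rfl⟩, v, hv, hb⟩ := (LinearMap.range T).exists_add_mem_mem_orthogonal (f 0)
  have hfix : f.linearIsometry v = v := by
    have horth : ⟪f.linearIsometry v - v, v⟫ = 0 := (Submodule.mem_orthogonal _ _).1 hv _ ⟨v, rfl⟩
    rw [inner_sub_left, sub_eq_zero] at horth
    have hnorm : ‖f.linearIsometry v - v‖ ^ 2 = 0 := by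
      rw [norm_sub_sq_real, horth, f.linearIsometry.norm_map, real_inner_self_eq_norm_sq]
      ring
    exact sub_eq_zero.1 (norm_eq_zero.1 (eq_zero_of_pow_eq_zero hnorm))
  have horigin : f (-w) = -w + v := by
    have := f.map_vadd 0 (-w)
    simp only [vadd_eq_add, add_zero] at this
    rw [this, hb]
    simp only [T, LinearMap.sub_apply, LinearIsometry.coe_toLinearMap, LinearMap.id_apply, map_neg]
    abel
  refine ⟨-w, v, horigin, hfix, ?_⟩
  rintro rfl
  exact hf (-w) (by rw [horigin, add_zero])

/-- The affine coordinate along the line through `o` with direction `v`, normalized to be `0` at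
`o` and `1` at `o + v`. -/
def axialCoord (o v : E) : E →ᵃ[ℝ] ℝ :=
  ((‖v‖ ^ 2)⁻¹ • innerₗ E v).toAffineMap.comp (AffineMap.id ℝ E - AffineMap.const ℝ E o)

/-- The component of `x - o` orthogonal to `v`: the position of `x` relative to the line through `o`
with direction `v`. -/
def radialPart (o v : E) : E →ᵃ[ℝ] E :=
  AffineMap.id ℝ E - AffineMap.const ℝ E o -
    (LinearMap.toSpanSingleton ℝ E v).toAffineMap.comp (axialCoord o v)

theorem axialCoord_apply (o v x : E) : axialCoord o v x = (‖v‖ ^ 2)⁻¹ * ⟪v, x - o⟫ := rfl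

theorem radialPart_apply (o v x : E) : radialPart o v x = x - o - axialCoord o v x • v := rfl

theorem origin_add_radialPart_add_axialCoord_smul (o v x : E) :
    o + radialPart o v x + axialCoord o v x • v = x := by
  rw [radialPart_apply]
  abel

namespace IsTranslationAxis

variable {f : E →ᵃⁱ[ℝ] E} {o v : E} (hf : IsTranslationAxis f o v)
include hf

theorem map_sub_origin (x : E) : f x - o = f.linearIsometry (x - o) + v := by
  have := f.map_vadd o (x - o)
  simp only [vadd_eq_add, sub_add_cancel, hf.map_origin] at this
  rw [this]
  abel

theorem axialCoord_map (x : E) : axialCoord o v (f x) = axialCoord o v x + 1 := by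
  have hv : ‖v‖ ^ 2 ≠ 0 := pow_ne_zero 2 (norm_ne_zero_iff.2 hf.direction_ne_zero)
  have hinner : ⟪v, f.linearIsometry (x - o)⟫ = ⟪v, x - o⟫ := by
    nth_rw 1 [← hf.map_direction]
    exact f.linearIsometry.inner_map_map _ _
  rw [axialCoord_apply, axialCoord_apply, hf.map_sub_origin, inner_add_right, hinner,
    real_inner_self_eq_norm_sq, mul_add, inv_mul_cancel₀ hv]

theorem radialPart_map (x : E) : radialPart o v (f x) = f.linearIsometry (radialPart o v x) := by
  rw [radialPart_apply, radialPart_apply, hf.axialCoord_map, hf.map_sub_origin,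
    map_sub _ (x - o), map_smul, hf.map_direction, add_smul, one_smul]
  abel

theorem axialCoord_iterate (k : ℕ) (x : E) :
    axialCoord o v (f^[k] x) = axialCoord o v x + k := by
  have hsemi : Function.Semiconj (axialCoord o v) f (· + 1) := hf.axialCoord_map
  rw [(hsemi.iterate_right k).eq, add_right_iterate_apply, nsmul_one]

theorem radialPart_iterate (k : ℕ) (x : E) :
    radialPart o v (f^[k] x) = f.linearIsometry^[k] (radialPart o v x) :=
  (Function.Semiconj.iterate_right (f := radialPart o v) hf.radialPart_map k).eq x

end IsTranslationAxis

end TranslationAxis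

/-- `c` is given on `s` by rational functions: this is required of every affine function of `c`,
which in coordinates amounts to rational components. -/
def IsRationalCurveOn {E : Type*} [AddCommGroup E] [Module ℝ E] (c : ℝ → E) (s : Set ℝ) : Prop :=
  ∀ φ : E →ᵃ[ℝ] ℝ, IsRationalOn (fun t => φ (c t)) s

section InvariantCurve

variable {E : Type*} [NormedAddCommGroup E] [InnerProductSpace ℝ E]
  {f : E →ᵃⁱ[ℝ] E} {o v : E} {c : ℝ → E} {s : Set ℝ}

namespace IsTranslationAxis

theorem exists_isRoot_inner_radialPart [FiniteDimensional ℝ E] (hf : IsTranslationAxis f o v)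
    (hc : IsRationalCurveOn c s) (hmaps : MapsTo f (c '' s) (c '' s)) (w : E) :
    ∃ p : ℝ[X], p ≠ 0 ∧ ∀ t ∈ s, p.IsRoot ⟪w, radialPart o v (c t)⟫ := by
  obtain ⟨F, hF₀, hF⟩ : ∃ F : ℝ[X][Y], F ≠ 0 ∧ ∀ t ∈ s,
      F.evalEval ⟪w, radialPart o v (c t)⟫ (axialCoord o v (c t)) = 0 :=
    (hc ((innerₗ E w).toAffineMap.comp (radialPart o v))).exists_evalEval_eq_zero (hc _)
  refine ⟨F.leadingCoeff, leadingCoeff_ne_zero.2 hF₀, fun t ht => ?_⟩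
  have hball : MapsTo f.linearIsometry (Metric.closedBall 0 ‖radialPart o v (c t)‖)
      (Metric.closedBall 0 ‖radialPart o v (c t)‖) := fun y hy => by
    rwa [mem_closedBall_zero_iff, f.linearIsometry.norm_map, ← mem_closedBall_zero_iff]
  obtain ⟨U, hU, hrec⟩ := mapClusterPt_iff_ultrafilter.1 <|
    mapClusterPt_iterate_of_isometry f.linearIsometry.isometry
      (isCompact_closedBall _ _) fun k => hball.iterate k (mem_closedBall_zero_iff.2 le_rfl)
  refine isRoot_leadingCoeff_of_tendsto (l := (U : Filter ℕ))
    (u := fun k => ⟪w, radialPart o v (f^[k] (c t))⟫)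
    (w := fun k => axialCoord o v (f^[k] (c t))) (.of_forall fun k => ?_) ?_ ?_
  · obtain ⟨t', ht', htt'⟩ := hmaps.iterate k (mem_image_of_mem c ht)
    rw [← htt']
    exact hF t' ht'
  · simp only [hf.radialPart_iterate]
    exact tendsto_const_nhds.inner hrec
  · simp only [hf.axialCoord_iterate]
    exact tendsto_atTop_add_const_left _ _ (tendsto_natCast_atTop_atTop.mono_left hU)

theorem exists_forall_radialPart_eq [FiniteDimensional ℝ E] (hf : IsTranslationAxis f o v)
    (hs : s.Infinite) (hc : IsRationalCurveOn c s) (hmaps : MapsTo f (c '' s) (c '' s)) :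
    ∃ r, ∀ t ∈ s, radialPart o v (c t) = r := by
  obtain ⟨t₀, ht₀⟩ := hs.nonempty
  refine ⟨radialPart o v (c t₀), fun t ht => ext_inner_left ℝ fun w => ?_⟩
  obtain ⟨p, hp, hroot⟩ := hf.exists_isRoot_inner_radialPart hc hmaps w
  obtain ⟨a, ha⟩ := (hc ((innerₗ E w).toAffineMap.comp (radialPart o v))).exists_eqOn_const hs
    ((finite_setOfPred_isRoot hp).subset (image_subset_iff.2 hroot))
  exact (ha t ht).trans (ha t₀ ht₀).symm

theorem axialCoord_image_eq_univ (hf : IsTranslationAxis f o v) (hs : sᶜ.Finite)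
    (hc : IsRationalCurveOn c s) (hinv : f '' (c '' s) = c '' s) :
    axialCoord o v '' (c '' s) = univ := by
  have hshift : ∀ a, a + 1 ∈ axialCoord o v '' (c '' s) ↔ a ∈ axialCoord o v '' (c '' s) := by
    intro a
    nth_rw 1 [← hinv]
    simp only [image_image _ f, hf.axialCoord_map]
    simp only [mem_image, add_left_inj]
  have hunb : ¬ BddAbove (axialCoord o v '' (c '' s)) := by
    obtain ⟨t₀, ht₀⟩ : s.Nonempty := by simpa using hs.infinite_compl.nonempty
    refine not_bddAbove_iff.2 fun b => ?_
    obtain ⟨k, hk⟩ := exists_nat_gt (b - axialCoord o v (c t₀))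
    refine ⟨_, mem_image_of_mem _ ((mapsTo_iff_image_subset.2 hinv.subset).iterate k
      (mem_image_of_mem c ht₀)), ?_⟩
    rw [hf.axialCoord_iterate]
    linarith
  rw [image_image] at hunb
  obtain ⟨b, hb⟩ := exists_Ici_subset_image_of_not_bddAbove hs (hc _).continuousOn hunb
  exact eq_univ_of_add_one_mem_iff hshift (by rwa [image_image])

theorem image_eq_line [FiniteDimensional ℝ E] (hf : IsTranslationAxis f o v) (hs : sᶜ.Finite)
    (hc : IsRationalCurveOn c s) (hinv : f '' (c '' s) = c '' s) :
    ∃ p, c '' s = {x | ∃ a : ℝ, x = p + a • v} := by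
  have hinf : s.Infinite := by simpa using hs.infinite_compl
  obtain ⟨r, hr⟩ := hf.exists_forall_radialPart_eq hinf hc (mapsTo_iff_image_subset.2 hinv.subset)
  have hline : ∀ t ∈ s, o + r + axialCoord o v (c t) • v = c t := fun t ht => by
    rw [← hr t ht, origin_add_radialPart_add_axialCoord_smul]
  refine ⟨o + r, Subset.antisymm ?_ ?_⟩
  · rintro _ ⟨t, ht, rfl⟩
    exact ⟨_, (hline t ht).symm⟩
  · rintro _ ⟨a, rfl⟩
    obtain ⟨_, ⟨t, ht, rfl⟩, rfl⟩ :=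
      (hf.axialCoord_image_eq_univ hs hc hinv).superset (mem_univ a)
    exact ⟨t, ht, (hline t ht).symm⟩

end IsTranslationAxis

end InvariantCurve

namespace RatParam

variable {n : ℕ} (X : RatParam n)

theorem finite_compl_domain : X.domainᶜ.Finite := by
  refine (finite_iUnion fun i => finite_setOfPred_isRoot (X.q_ne_zero i)).subset fun t ht => ?_
  simpa [domain] using ht

theorem isRationalCurveOn_eval : IsRationalCurveOn X.eval X.domain := by
  intro φ
  let b := EuclideanSpace.basisFun (Fin n) ℝ
  have hφ : ∀ x, φ x = ∑ i, x i * φ.linear (b i) + φ 0 := by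
    intro x
    rw [congrFun φ.decomp x, Pi.add_apply]
    nth_rw 1 [← b.sum_repr x]
    simp only [map_sum, map_smul, smul_eq_mul, b, EuclideanSpace.basisFun_repr]
  have hcoord : ∀ i, IsRationalOn (fun t => X.eval t i) X.domain := fun i =>
    ⟨X.p i, X.q i, fun t ht => ⟨ht i, rfl⟩⟩
  rw [funext fun t => hφ (X.eval t)]
  exact (IsRationalOn.sum _ fun i _ => (hcoord i).mul (.const _ _)).add (.const _ _)

end RatParam

theorem statement_10_general {n : ℕ} (X : RatParam n) (hline : ¬ IsLine X.curve)
    (f : EuclideanSpace ℝ (Fin n) → EuclideanSpace ℝ (Fin n)) (hf : Isometry f)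
    (hinv : f '' X.curve = X.curve) : ∃ p, f p = p := by
  by_contra! hfree
  obtain ⟨o, v, haxis⟩ := exists_isTranslationAxis (f := hf.affineIsometryOfStrictConvexSpace) hfree
  obtain ⟨p, hp⟩ := haxis.image_eq_line X.finite_compl_domain X.isRationalCurveOn_eval hinv
  exact hline ⟨p, v, haxis.direction_ne_zero, hp⟩

/-- Let `n = 2` or `n = 3`, and let `C ⊆ ℝⁿ` be an infinite rational curve
that is not a line. Then every isometry `f` of `ℝⁿ` with `f(C) = C` has a fixed point. -/
theorem statement_10 {n : ℕ} (hn : n = 2 ∨ n = 3) (X : RatParam n)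
    (C : Set (EuclideanSpace ℝ (Fin n))) (hC : C = X.curve) (hCinf : C.Infinite)
    (hline : ¬ IsLine C)
    (f : EuclideanSpace ℝ (Fin n) → EuclideanSpace ℝ (Fin n))
    (hf : Isometry f) (hbij : Function.Bijective f) (hinv : f '' C = C) :
    ∃ p, f p = p := by
  subst hC
  exact statement_10_general X hline f hf hinv
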